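/- In the spined category Grph_m of simple graphs and monomorphisms, every chordal graph is pseudo-chordal: all S-functors on Grph_m assign a chordal graph G the value ω(G), its clique number. -/

import Mathlib

open CategoryTheory


/-- A spined category: a category with a spine `Ω : ℕ → C` and a proxy pushout
operation `P`, satisfying SC1 and SC2. -/
structure SpinedStruct (C : Type*) [Category C] where
  Ω : ℕ → C
  P : ∀ {n : ℕ} {G H : C}, (Ω n ⟶ G) → (Ω n ⟶ H) → C
  inl : ∀ {n : ℕ} {G H : C} (g : Ω n ⟶ G) (h : Ω n ⟶ H), G ⟶ P g h
  inr : ∀ {n : ℕ} {G H : C} (g : Ω n ⟶ G) (h : Ω n ⟶ H), H ⟶ P g h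
  sc1 : ∀ X : C, ∃ n : ℕ, Nonempty (X ⟶ Ω n)
  sc2 : ∀ {n : ℕ} {G G' H H' : C} (g : Ω n ⟶ G) (h : Ω n ⟶ H)
      (g' : G ⟶ G') (h' : H ⟶ H'),
      ∃! m : P g h ⟶ P (g ≫ g') (h ≫ h'),
        inl g h ≫ m = g' ≫ inl (g ≫ g') (h ≫ h') ∧
        inr g h ≫ m = h' ≫ inr (g ≫ g') (h ≫ h')

/-- An S-functor on a spined category: a spinal functor to `Nat = (ℕ, ≤)`,
equivalently a monotone-under-morphisms assignment `s : ob C → ℕ` with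
`s (Ω n) = n` and `s (P g h) = max (s G) (s H)`. -/
structure SFunctor {C : Type*} [Category C] (S : SpinedStruct C) where
  s : C → ℕ
  mono : ∀ {X Y : C}, (X ⟶ Y) → s X ≤ s Y
  spine : ∀ n : ℕ, s (S.Ω n) = n
  pp : ∀ {n : ℕ} {G H : C} (g : S.Ω n ⟶ G) (h : S.Ω n ⟶ H),
      s (S.P g h) = max (s G) (s H)

/-- An object is pseudo-chordal if all S-functors agree on it. -/
def PseudoChordal {C : Type*} [Category C] (S : SpinedStruct C) (X : C) : Prop :=
  ∀ F G : SFunctor S, F.s X = G.s X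

/-- The triangulation map `Δ(G) = min { s(H) | H pseudo-chordal, C(G,H) ≠ ∅ }`. -/
noncomputable def Delta {C : Type*} [Category C] (S : SpinedStruct C)
    (s : SFunctor S) (G : C) : ℕ :=
  sInf { k | ∃ H : C, PseudoChordal S H ∧ Nonempty (G ⟶ H) ∧ s.s H = k }

/-- Bundled finite simple graphs. -/
structure Grph : Type 1 where
  V : Type
  [fin : Fintype V]
  G : SimpleGraph V

attribute [instance] Grph.fin

/-- The category of finite simple graphs and graph homomorphisms. -/
instance : Category Grph where
  Hom A B := A.G →g B.G
  id A := SimpleGraph.Hom.id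
  comp f g := g.comp f

/-- The category of finite simple graphs and graph monomorphisms. -/
def GrphM : Type 1 := Grph

instance : Category GrphM where
  Hom A B := { f : (Grph.G A) →g (Grph.G B) // Function.Injective f }
  id A := ⟨SimpleGraph.Hom.id, fun _ _ h => h⟩
  comp f g := ⟨g.1.comp f.1, g.2.comp f.2⟩

/-- The complete graph on `n` vertices, as an object of `GrphM`. -/
def Kn (n : ℕ) : GrphM := { V := Fin n, G := (⊤ : SimpleGraph (Fin n)) }

/-- The clique number of an object of `GrphM`. -/
noncomputable def cliqueNumM (A : GrphM) : ℕ := (Grph.G A).cliqueNum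

/-- A graph is chordal if every cycle on more than 3 vertices has a chord:
an edge of the graph between two vertices of the cycle that is not an edge
of the cycle. -/
def SimpleGraph.IsChordal {V : Type*} (G : SimpleGraph V) : Prop :=
  ∀ ⦃v : V⦄ (p : G.Walk v v), p.IsCycle → 3 < p.length →
    ∃ u w, u ∈ p.support ∧ w ∈ p.support ∧ G.Adj u w ∧ s(u, w) ∉ p.edges

theorem chordal_induce {V : Type*} {G : SimpleGraph V} (hG : G.IsChordal) (s : Set V) :
    (G.induce s).IsChordal := by
  intro v p hp hl
  have hinj : Function.Injective (SimpleGraph.Embedding.induce (G := G) s).toHom :=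
    (SimpleGraph.Embedding.induce (G := G) s).injective
  obtain ⟨u, w, hu, hw, huw, he⟩ := hG (p.map (SimpleGraph.Embedding.induce s).toHom)
    (hp.map hinj) (by rw [SimpleGraph.Walk.length_map]; exact hl)
  rw [SimpleGraph.Walk.support_map, List.mem_map] at hu hw
  obtain ⟨u', hu', rfl⟩ := hu
  obtain ⟨w', hw', rfl⟩ := hw
  refine ⟨u', w', hu', hw', huw, fun h => he ?_⟩
  rw [SimpleGraph.Walk.edges_map, List.mem_map]
  exact ⟨_, h, rfl⟩

/-- A shortest walk inside a set `T` has no chords. -/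
theorem exists_chordless {V : Type*} {G : SimpleGraph V} (T : Set V) {x y : V}
    (p₀ : G.Walk x y) (hp₀ : ∀ z ∈ p₀.support, z ∈ T) :
    ∃ p : G.Walk x y, p.IsPath ∧ (∀ z ∈ p.support, z ∈ T) ∧
      ∀ u ∈ p.support, ∀ w ∈ p.support, G.Adj u w → s(u, w) ∈ p.edges := by
  classical
  have hex : ∃ n, ∃ p : G.Walk x y, (∀ z ∈ p.support, z ∈ T) ∧ p.length = n :=
    ⟨_, p₀, hp₀, rfl⟩
  obtain ⟨q, hqT, hql⟩ := Nat.find_spec hex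
  have hmin : ∀ r : G.Walk x y, (∀ z ∈ r.support, z ∈ T) → q.length ≤ r.length := by
    intro r hr
    rw [hql]
    exact Nat.find_min' hex ⟨r, hr, rfl⟩
  have hpT : ∀ z ∈ q.bypass.support, z ∈ T := fun z hz =>
    hqT z (q.support_bypass_subset_support hz)
  refine ⟨q.bypass, q.bypass_isPath, hpT, ?_⟩
  have hmin' : ∀ r : G.Walk x y, (∀ z ∈ r.support, z ∈ T) → q.bypass.length ≤ r.length :=
    fun r hr => q.length_bypass_le_length.trans (hmin r hr)
  generalize q.bypass = p at hpT hmin'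
  have key : ∀ i j, i < j → j ≤ p.length → G.Adj (p.getVert i) (p.getVert j) →
      s(p.getVert i, p.getVert j) ∈ p.edges := by
    intro i j hij hj hadj
    have h1 := hmin' ((p.take i).append (.cons hadj (p.drop j))) (by
      intro z hz
      rw [SimpleGraph.Walk.mem_support_append_iff] at hz
      rcases hz with hz | hz
      · exact hpT z ((p.isSubwalk_take i).support_subset hz)
      · rw [SimpleGraph.Walk.support_cons, List.mem_cons] at hz
        rcases hz with rfl | hz
        · exact hpT _ (p.getVert_mem_support i)
        · exact hpT z ((p.isSubwalk_drop j).support_subset hz))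
    simp only [SimpleGraph.Walk.length_append, SimpleGraph.Walk.length_cons,
      SimpleGraph.Walk.take_length, SimpleGraph.Walk.drop_length] at h1
    have : j = i + 1 := by omega
    subst this
    rw [SimpleGraph.Walk.mk_mem_edges_iff_exists]
    exact ⟨i, by omega, rfl⟩
  intro u hu w hw huw
  obtain ⟨i, rfl, hi⟩ := SimpleGraph.Walk.mem_support_iff_exists_getVert.1 hu
  obtain ⟨j, rfl, hj⟩ := SimpleGraph.Walk.mem_support_iff_exists_getVert.1 hw
  rcases lt_trichotomy i j with h | h | h
  · exact key i j h hj huw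
  · subst h; exact absurd huw (G.irrefl)
  · rw [Sym2.eq_swap]; exact key j i h hi huw.symm

/-- A chordal graph with two nonadjacent vertices splits along a clique. -/
theorem chordal_split {V : Type*} {G : SimpleGraph V} (hG : G.IsChordal) {a b : V}
    (hab : a ≠ b) (hnab : ¬ G.Adj a b) :
    ∃ A B : Set V, a ∉ A ∧ b ∉ B ∧ (∀ v, v ∈ A ∨ v ∈ B) ∧
      (∀ u v, G.Adj u v → (u ∈ A ∧ v ∈ A) ∨ (u ∈ B ∧ v ∈ B)) ∧
      G.IsClique (A ∩ B) := by
  classical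
  set C : Set V := {v | ∃ p : G.Walk b v, ∀ z ∈ p.support, ¬ G.Adj a z ∧ z ≠ a} with hC
  set S : Set V := {s | G.Adj a s ∧ ∃ c ∈ C, G.Adj c s} with hS
  have hCa : ∀ c ∈ C, ¬ G.Adj a c ∧ c ≠ a := by
    rintro c ⟨p, hp⟩
    exact hp c p.end_mem_support
  have hbC : b ∈ C := ⟨.nil, by simp [hnab, hab.symm]⟩
  have hstep : ∀ u ∈ C, ∀ v, G.Adj u v → v ∈ C ∨ v ∈ S := by
    intro u hu v huv
    by_cases hav : G.Adj a v
    · exact Or.inr ⟨hav, u, hu, huv⟩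
    · left
      have hva : v ≠ a := by
        rintro rfl
        exact (hCa u hu).1 huv.symm
      obtain ⟨p, hp⟩ := hu
      refine ⟨p.concat huv, ?_⟩
      intro z hz
      rw [SimpleGraph.Walk.support_concat, List.mem_append] at hz
      rcases hz with hz | hz
      · exact hp z hz
      · rw [List.mem_singleton] at hz
        subst hz
        exact ⟨hav, hva⟩
  have hwalkC : ∀ c ∈ C, ∃ p : G.Walk b c, ∀ z ∈ p.support, z ∈ C := by
    rintro c ⟨p, hp⟩
    exact ⟨p, fun z hz => ⟨p.takeUntil z hz, fun t ht =>
      hp t (p.support_takeUntil_subset_support hz ht)⟩⟩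
  have hSC : ∀ s ∈ S, s ∉ C := fun s hs hc => (hCa s hc).1 hs.1
  refine ⟨C ∪ S, Cᶜ, ?_, ?_, ?_, ?_, ?_⟩
  · rintro (h | h)
    · exact (hCa a h).2 rfl
    · exact G.irrefl h.1
  · exact fun h => h hbC
  · intro v
    by_cases h : v ∈ C
    · exact Or.inl (Or.inl h)
    · exact Or.inr h
  · intro u v huv
    by_cases hu : u ∈ C
    · exact Or.inl ⟨Or.inl hu, hstep u hu v huv⟩
    · by_cases hv : v ∈ C
      · exact Or.inl ⟨hstep v hv u huv.symm, Or.inl hv⟩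
      · exact Or.inr ⟨hu, hv⟩
  · rintro x ⟨hx, hxC⟩ y ⟨hy, hyC⟩ hxy
    replace hx : x ∈ S := hx.resolve_left hxC
    replace hy : y ∈ S := hy.resolve_left hyC
    by_contra hnadj
    obtain ⟨hax, c, hc, hcx⟩ := hx
    obtain ⟨hay, d, hd, hdy⟩ := hy
    obtain ⟨p, hp⟩ := hwalkC c hc
    obtain ⟨q, hq⟩ := hwalkC d hd
    obtain ⟨r, hr, hrT, hrc⟩ := exists_chordless (C ∪ {x, y})
      (.cons hcx.symm ((p.reverse.append q).concat hdy)) (by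
        intro z hz
        simp only [SimpleGraph.Walk.support_cons, SimpleGraph.Walk.support_concat,
          List.mem_cons, List.mem_append, SimpleGraph.Walk.mem_support_append_iff,
          SimpleGraph.Walk.support_reverse, List.mem_reverse, List.mem_singleton] at hz
        rcases hz with rfl | (hz | hz) | hz
        · simp
        · exact Or.inl (hp z hz)
        · exact Or.inl (hq z hz)
        · simp_all)
    have har : a ∉ r.support := by
      intro h
      rcases hrT a h with h | h | h
      · exact (hCa a h).2 rfl
      · subst h; exact G.irrefl hax
      · have h : a = y := h
        subst h; exact G.irrefl hay
    have hcyc : (SimpleGraph.Walk.cons hax (r.concat hay.symm)).IsCycle := by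
      rw [SimpleGraph.Walk.cons_isCycle_iff]
      refine ⟨hr.concat har hay.symm, ?_⟩
      rw [SimpleGraph.Walk.edges_concat, List.concat_eq_append, List.mem_append]
      rintro (h | h)
      · exact har (r.fst_mem_support_of_mem_edges h)
      · simp only [List.mem_singleton, Sym2.eq_iff] at h
        rcases h with ⟨h, -⟩ | ⟨-, h⟩
        · exact hay.ne h
        · exact hxy h
    have hlen : 2 ≤ r.length := by
      by_contra hlt
      have : r.length = 0 ∨ r.length = 1 := by omega
      rcases this with h | h
      · exact hxy (SimpleGraph.Walk.eq_of_length_eq_zero h)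
      · exact hnadj (SimpleGraph.Walk.adj_of_length_eq_one h)
    obtain ⟨u, w, hu, hw, huw, he⟩ := hG _ hcyc (by simp; omega)
    have hadja : ∀ w ∈ r.support, G.Adj a w → w = x ∨ w = y := by
      intro w hw haw
      rcases hrT w hw with h | h
      · exact absurd haw (hCa w h).1
      · exact h
    simp only [SimpleGraph.Walk.support_cons, SimpleGraph.Walk.support_concat,
      List.mem_cons, List.mem_append, List.not_mem_nil, or_false,
      SimpleGraph.Walk.edges_cons, SimpleGraph.Walk.edges_concat, List.concat_eq_append] at hu hw he
    push Not at he
    have hu' : u = a ∨ u ∈ r.support := by tauto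
    have hw' : w = a ∨ w ∈ r.support := by tauto
    rcases hu' with rfl | hu'
    · rcases hw' with rfl | hw'
      · exact G.irrefl huw
      · rcases hadja w hw' huw with rfl | rfl
        · exact he.1 rfl
        · exact he.2.2 Sym2.eq_swap
    · rcases hw' with rfl | hw'
      · rcases hadja u hu' huw.symm with rfl | rfl
        · exact he.1 Sym2.eq_swap
        · exact he.2.2 rfl
      · exact he.2.1 (hrc u hu' w hw' huw)

/-- The induced subgraph as an object of `GrphM`. -/
noncomputable def indM (A : GrphM) (s : Set (Grph.V A)) : GrphM :=
  letI : Fintype (Grph.V A) := Grph.fin A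
  letI : Fintype s := Fintype.ofFinite s
  ({ V := s, G := (Grph.G A).induce s } : Grph)

theorem sfunctor_le (S : SpinedStruct GrphM)
    (hΩ : ∀ n : ℕ, S.Ω n = Kn n)
    (hP : ∀ {n : ℕ} {A B : GrphM} (g : S.Ω n ⟶ A) (h : S.Ω n ⟶ B),
      IsPushout (C := Grph) g.1 h.1 (S.inl g h).1 (S.inr g h).1)
    (F : SFunctor S) (A : GrphM) (X Y : Set (Grph.V A))
    (hcov : ∀ v, v ∈ X ∨ v ∈ Y)
    (hadj : ∀ u v, (Grph.G A).Adj u v → (u ∈ X ∧ v ∈ X) ∨ (u ∈ Y ∧ v ∈ Y))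
    (hcl : (Grph.G A).IsClique (X ∩ Y)) :
    F.s A ≤ max (F.s (indM A X)) (F.s (indM A Y)) := by
  classical
  have : Fintype (Grph.V A) := Grph.fin A
  have key : ∀ K : GrphM, K = Kn (Nat.card (X ∩ Y : Set _)) →
      ∃ (g : K ⟶ indM A X) (h : K ⟶ indM A Y),
      (∀ k, (g.1 k : X).1 = (h.1 k : Y).1) ∧
      ∀ s ∈ X ∩ Y, ∃ k, (g.1 k : X).1 = s := by
    rintro _ rfl
    let e := (Finite.equivFin (X ∩ Y : Set (Grph.V A))).symm
    have hne : ∀ i j, i ≠ j → (Grph.G A).Adj (e i).1 (e j).1 := fun i j hij =>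
      hcl (e i).2 (e j).2 (fun h => hij (e.injective (Subtype.ext h)))
    refine ⟨⟨⟨fun k => (⟨(e k).1, (e k).2.1⟩ : X), fun {i j} hij => hne i j hij⟩, ?_⟩,
      ⟨⟨fun k => (⟨(e k).1, (e k).2.2⟩ : Y), fun {i j} hij => hne i j hij⟩, ?_⟩, ?_, ?_⟩
    · intro i j hij
      exact e.injective (Subtype.ext (congrArg (fun z : X => z.1) hij))
    · intro i j hij
      exact e.injective (Subtype.ext (congrArg (fun z : Y => z.1) hij))
    · intro k; rfl
    · intro s hs
      exact ⟨e.symm ⟨s, hs⟩, congrArg Subtype.val (e.apply_symm_apply ⟨s, hs⟩)⟩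
  obtain ⟨g, h, hgh, hsurj⟩ := key _ (hΩ _)
  rw [← F.pp g h]
  have po := hP g h
  let iX : (show Grph from indM A X) ⟶ (show Grph from A) :=
    (SimpleGraph.Embedding.induce (G := Grph.G A) X).toHom
  let iY : (show Grph from indM A Y) ⟶ (show Grph from A) :=
    (SimpleGraph.Embedding.induce (G := Grph.G A) Y).toHom
  have hcomm : CategoryStruct.comp (obj := Grph) g.1 iX = CategoryStruct.comp (obj := Grph) h.1 iY := by
    apply RelHom.ext
    intro k
    exact hgh k
  let d : Grph.G (S.P g h) →g Grph.G A := po.desc iX iY hcomm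
  have hd1 : ∀ x : X, d ((S.inl g h).1 x) = x.1 := fun x =>
    congrArg (fun f : (Grph.G (indM A X)) →g (Grph.G A) => f x) (po.inl_desc iX iY hcomm)
  have hd2 : ∀ x : Y, d ((S.inr g h).1 x) = x.1 := fun x =>
    congrArg (fun f : (Grph.G (indM A Y)) →g (Grph.G A) => f x) (po.inr_desc iX iY hcomm)
  have hw : ∀ k, (S.inl g h).1 (g.1 k) = (S.inr g h).1 (h.1 k) := fun k =>
    congrArg (fun f : (Grph.G (S.Ω _)) →g (Grph.G (S.P g h)) => f k) po.w
  have hXY : ∀ v (hx : v ∈ X) (hy : v ∈ Y),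
      (S.inl g h).1 (⟨v, hx⟩ : X) = (S.inr g h).1 (⟨v, hy⟩ : Y) := by
    intro v hx hy
    obtain ⟨k, hk⟩ := hsurj v ⟨hx, hy⟩
    have e1 : g.1 k = (⟨v, hx⟩ : X) := Subtype.ext hk
    have e2 : h.1 k = (⟨v, hy⟩ : Y) := Subtype.ext ((hgh k).symm.trans hk)
    rw [← e1, ← e2]
    exact hw k
  let f : Grph.V A → Grph.V (S.P g h) := fun v =>
    if hx : v ∈ X then (S.inl g h).1 (⟨v, hx⟩ : X)
    else (S.inr g h).1 (⟨v, (hcov v).resolve_left hx⟩ : Y)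
  have fX : ∀ v (hx : v ∈ X), f v = (S.inl g h).1 (⟨v, hx⟩ : X) := fun v hx => dif_pos hx
  have fY : ∀ v (hy : v ∈ Y), f v = (S.inr g h).1 (⟨v, hy⟩ : Y) := by
    intro v hy
    by_cases hx : v ∈ X
    · rw [fX v hx, hXY v hx hy]
    · exact dif_neg hx
  have hleft : ∀ v, d (f v) = v := by
    intro v
    rcases hcov v with hv | hv
    · rw [fX v hv]; exact hd1 ⟨v, hv⟩
    · rw [fY v hv]; exact hd2 ⟨v, hv⟩
  refine F.mono (X := A) (Y := S.P g h) ⟨⟨f, ?_⟩, ?_⟩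
  · intro u v huv
    rcases hadj u v huv with ⟨hu, hv⟩ | ⟨hu, hv⟩
    · rw [fX u hu, fX v hv]
      exact (S.inl g h).1.map_adj huv
    · rw [fY u hu, fY v hv]
      exact (S.inr g h).1.map_adj huv
  · exact Function.LeftInverse.injective hleft

theorem sfunctor_le_clique (S : SpinedStruct GrphM)
    (hΩ : ∀ n : ℕ, S.Ω n = Kn n)
    (hP : ∀ {n : ℕ} {A B : GrphM} (g : S.Ω n ⟶ A) (h : S.Ω n ⟶ B),
      IsPushout (C := Grph) g.1 h.1 (S.inl g h).1 (S.inr g h).1)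
    (F : SFunctor S) : ∀ (N : ℕ) (A : GrphM), Nat.card (Grph.V A) = N →
      (Grph.G A).IsChordal → F.s A ≤ cliqueNumM A := by
  classical
  intro N
  induction N using Nat.strong_induction_on with
  | _ N ih =>
  intro A hN hA
  have : Fintype (Grph.V A) := Grph.fin A
  by_cases hcomp : ∀ a b : Grph.V A, a ≠ b → (Grph.G A).Adj a b
  · have e := Finite.equivFin (Grph.V A)
    have h1 : F.s A ≤ F.s (Kn (Nat.card (Grph.V A))) :=
      F.mono ⟨⟨fun v => e v, fun {u v} huv => fun h => huv.ne (e.injective h)⟩, e.injective⟩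
    rw [← hΩ, F.spine] at h1
    refine h1.trans ?_
    have h2 := SimpleGraph.IsClique.card_le_cliqueNum (G := Grph.G A) (t := Finset.univ)
      (tc := fun a _ b _ hab => hcomp a b hab)
    rw [Nat.card_eq_fintype_card]
    exact h2
  · push Not at hcomp
    obtain ⟨a, b, hab, hnab⟩ := hcomp
    obtain ⟨X, Y, haX, hbY, hcov, hadj, hcl⟩ := chordal_split hA hab hnab
    have hlt : ∀ (Z : Set (Grph.V A)) (z : Grph.V A), z ∉ Z →
        F.s (indM A Z) ≤ cliqueNumM A := by
      intro Z z hz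
      have hc : Nat.card (Grph.V (indM A Z)) < N := by
        rw [← hN]
        exact Finite.card_subtype_lt hz
      exact (ih _ hc (indM A Z) rfl (chordal_induce hA Z)).trans
        (SimpleGraph.cliqueNum_induce_le (G := Grph.G A) Z)
    exact (sfunctor_le S hΩ hP F A X Y hcov hadj hcl).trans
      (max_le (hlt X a haX) (hlt Y b hbY))

theorem clique_le_sfunctor (S : SpinedStruct GrphM)
    (hΩ : ∀ n : ℕ, S.Ω n = Kn n) (F : SFunctor S) (A : GrphM) : cliqueNumM A ≤ F.s A := by
  obtain ⟨t, ht⟩ := (Grph.G A).exists_isNClique_cliqueNum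
  have e := (t.equivFinOfCardEq ht.card_eq).symm
  have h1 : F.s (Kn (cliqueNumM A)) ≤ F.s A :=
    F.mono ⟨⟨fun k => (e k).1, fun {i j} hij =>
      ht.isClique (e i).2 (e j).2 (fun h => hij (e.injective (Subtype.ext h)))⟩,
      fun i j h => e.injective (Subtype.ext h)⟩
  rwa [← hΩ, F.spine] at h1

/-- In `Grph_m`, every chordal graph is pseudo-chordal: all S-functors assign
it its clique number. -/
theorem chordal_pseudoChordal (S : SpinedStruct GrphM)
    (hΩ : ∀ n : ℕ, S.Ω n = Kn n)
    (hP : ∀ {n : ℕ} {A B : GrphM} (g : S.Ω n ⟶ A) (h : S.Ω n ⟶ B),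
      IsPushout (C := Grph) g.1 h.1 (S.inl g h).1 (S.inr g h).1)
    (A : GrphM) (hA : (Grph.G A).IsChordal) :
    ∀ F : SFunctor S, F.s A = cliqueNumM A := by
  intro F
  exact le_antisymm (sfunctor_le_clique S hΩ hP F _ A rfl hA) (clique_le_sfunctor S hΩ F A)
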